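/- arXiv:1303.7328 — 5 statements merged into one kernel-verified Lean document; each statement's English description precedes it below -/
import Mathlib

section
/- Let ≈ be a congruence on L.Term α and Γ a set of terms. Then Γ ⊢ M in System 𝒩 if and only if there exists a term N ∈ cl(Γ) with M ≈ N. (Hence the intruder deduction problem for System 𝒩 is equivalent to the elementary deduction problem: Γ ⊢ M iff M ≈ C[M_1,…,M_k] for some L-context C and terms M_1,…,M_k ∈ Γ.) -/
open FirstOrder

variable {L : Language} {α : Type*}

/-- `r` is a congruence: an equivalence relation compatible with all function symbols. -/
structure IsCongruence (L : Language) (α : Type*) (r : L.Term α → L.Term α → Prop) : Prop where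
  equiv : Equivalence r
  compat : ∀ {n : ℕ} (f : L.Functions n) (Ms Ns : Fin n → L.Term α),
      (∀ i, r (Ms i) (Ns i)) → r (Language.Term.func f Ms) (Language.Term.func f Ns)

/-- System 𝒩: the intruder deduction relation `Γ ⊢ M` modulo the equational relation `r`. -/
inductive Deduce (r : L.Term α → L.Term α → Prop) (Γ : Set (L.Term α)) : L.Term α → Prop
  | id {M : L.Term α} : M ∈ Γ → Deduce r Γ M
  | fI {n : ℕ} (f : L.Functions n) (Ms : Fin n → L.Term α) :
      (∀ i, Deduce r Γ (Ms i)) → Deduce r Γ (Language.Term.func f Ms)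
  | eq {M N : L.Term α} : Deduce r Γ N → r M N → Deduce r Γ M

/-- The context closure `cl(Γ)`: the smallest set containing `Γ` and closed under the
function symbols of `L`; its members are exactly the terms `C[M₁,…,Mₖ]` for an `L`-context
`C` and `M₁,…,Mₖ ∈ Γ`. -/
inductive ContextClosure (Γ : Set (L.Term α)) : L.Term α → Prop
  | mem {M : L.Term α} : M ∈ Γ → ContextClosure Γ M
  | func {n : ℕ} (f : L.Functions n) (Ms : Fin n → L.Term α) :
      (∀ i, ContextClosure Γ (Ms i)) → ContextClosure Γ (Language.Term.func f Ms)

/-- IDP for System 𝒩 is equivalent to EDP: `Γ ⊢ M` iff `M ≈ N` for some `N ∈ cl(Γ)`. -/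
theorem deduce_iff_exists_contextClosure
    (r : L.Term α → L.Term α → Prop) (hr : IsCongruence L α r)
    (Γ : Set (L.Term α)) (M : L.Term α) :
    Deduce r Γ M ↔ ∃ N, ContextClosure Γ N ∧ r M N := by
  constructor
  · intro h
    induction h with
    | id h => exact ⟨_, .mem h, hr.equiv.refl _⟩
    | fI f Ms _ ih =>
      choose Ns h1 h2 using ih
      exact ⟨_, .func f Ns h1, hr.compat f Ms Ns h2⟩
    | eq _ h ih =>
      obtain ⟨N, h1, h2⟩ := ih
      exact ⟨N, h1, hr.equiv.trans h h2⟩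
  · rintro ⟨N, hN, h⟩
    refine Deduce.eq ?_ h
    clear h
    induction hN with
    | mem h => exact .id h
    | func f Ms _ ih => exact .fI f Ms ih
end

section
/- Let ≈ be a congruence on L.Term α, and let Γ and Δ be sets of terms. If Γ ⊢ A in System 𝒩 for every A ∈ Δ, and Δ ⊢ M in System 𝒩, then Γ ⊢ M in System 𝒩 (admissibility of cut for the intruder deduction system 𝒩). -/
open FirstOrder

variable {L : Language} {α : Type*}

/-- Admissibility of cut for System 𝒩: if every member of `Δ` is deducible from `Γ`, and
`M` is deducible from `Δ`, then `M` is deducible from `Γ`. -/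
theorem deduce_cut
    (r : L.Term α → L.Term α → Prop) (hr : IsCongruence L α r)
    (Γ Δ : Set (L.Term α)) (M : L.Term α)
    (hΔ : ∀ A ∈ Δ, Deduce r Γ A) (hM : Deduce r Δ M) :
    Deduce r Γ M := by
  induction hM with
  | id h => exact hΔ _ h
  | fI f Ms _ ih => exact Deduce.fI f Ms ih
  | eq _ h ih => exact Deduce.eq ih h
end

section
/- Let ≈ be a congruence on L.Term α, Γ a set of terms, and S a set of terms (a saturation of Γ) such that Γ ⊆ S and Γ ⊢ A in System 𝒩 for every A ∈ S. Then Γ ⊢ M in System 𝒩 if and only if there exists N ∈ cl(S) with M ≈ N; i.e., M is deducible from Γ if and only if M is ≈-equal to an L-context applied to terms of the saturated set S. -/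
open FirstOrder

variable {L : Language} {α : Type*}

/-- If `S` is a saturation of `Γ` (i.e. `Γ ⊆ S` and every member of `S` is deducible from
`Γ`), then `Γ ⊢ M` iff `M` is `r`-equal to an `L`-context applied to terms of `S`. -/
theorem deduce_iff_exists_contextClosure_saturation
    (r : L.Term α → L.Term α → Prop) (hr : IsCongruence L α r)
    (Γ S : Set (L.Term α)) (hΓS : Γ ⊆ S) (hS : ∀ A ∈ S, Deduce r Γ A)
    (M : L.Term α) :
    Deduce r Γ M ↔ ∃ N, ContextClosure S N ∧ r M N := by
  constructor
  · intro h
    induction h with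
    | id h => exact ⟨_, ContextClosure.mem (hΓS h), hr.equiv.refl _⟩
    | fI f Ms _ ih =>
      choose Ns h1 h2 using ih
      exact ⟨_, ContextClosure.func f Ns h1, hr.compat f Ms Ns h2⟩
    | eq _ h ih =>
      obtain ⟨N, h1, h2⟩ := ih
      exact ⟨N, h1, hr.equiv.trans h h2⟩
  · rintro ⟨N, h1, h2⟩
    refine Deduce.eq ?_ h2
    clear h2
    induction h1 with
    | mem h => exact hS _ h
    | func f Ms _ ih => exact Deduce.fI f Ms ih
end

section
/- Let r be a strongly normalizing and confluent binary relation on a type α, and let P be a predicate on α such that whenever P x and r x y, there exists z with r^* y z and P z (any one-step reduct of an element satisfying P reduces further to an element satisfying P). Then for all x and T, if P x, r^* x T, and T is r-normal, then P T. (Abstract form of the passage from one-step closeness of saturated-context representations to their preservation at normal forms.) -/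
/-- Abstract form of the passage from one-step closeness of saturated-context
representations to their preservation at normal forms: if `r` is strongly normalizing and
confluent, and any one-step reduct of an element satisfying `P` reduces further to an
element satisfying `P`, then `P` holds at any `r`-normal form of an element satisfying `P`. -/
theorem pred_of_reflTransGen_of_normal {α : Type*} (r : α → α → Prop)
    (hSN : WellFounded (fun a b => r b a))
    (hconf : ∀ x y z, Relation.ReflTransGen r x y → Relation.ReflTransGen r x z →
      ∃ w, Relation.ReflTransGen r y w ∧ Relation.ReflTransGen r z w)
    (P : α → Prop)
    (hP : ∀ x y, P x → r x y → ∃ z, Relation.ReflTransGen r y z ∧ P z) :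
    ∀ x T, P x → Relation.ReflTransGen r x T → (∀ u, ¬ r T u) → P T := by
  intro x T hx hxT hT
  have key : ∀ x z, Relation.ReflTransGen r x z → P z → Relation.ReflTransGen r z T → P T := by
    intro x
    induction x using hSN.induction with
    | _ x ih =>
      intro z hxz hz hzT
      rcases Relation.ReflTransGen.cases_head hxz with rfl | ⟨y, hxy, hyz⟩
      · rcases Relation.ReflTransGen.cases_head hzT with rfl | ⟨y, hxy, hyT⟩
        · exact hz
        · obtain ⟨z', hyz', hz'⟩ := hP _ _ hz hxy
          obtain ⟨w, hTw, hzw⟩ := hconf _ _ _ hyT hyz'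
          rcases Relation.ReflTransGen.cases_head hTw with rfl | ⟨u, hu, _⟩
          · exact ih y hxy z' hyz' hz' hzw
          · exact absurd hu (hT u)
      · exact ih y hxy z hyz hz hzT
  exact key x x Relation.ReflTransGen.refl hx hxT
end

section
/- For every term M : FreeMagma α, the AC-equivalence class {N : FreeMagma α | N ≈_AC M} is a finite set. (This finiteness is what makes the saturated set sat(Γ) of the pure AC theory, which is closed modulo AC, a finite set.) -/
variable {α : Type*}

/-- AC-equivalence on terms of the pure AC theory over a single binary operator `⊕`
(the multiplication of `FreeMagma α`): the smallest equivalence relation containing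
commutativity and associativity and compatible with the operator. -/
inductive ACEquiv : FreeMagma α → FreeMagma α → Prop
  | comm (M N : FreeMagma α) : ACEquiv (M * N) (N * M)
  | assoc (M N P : FreeMagma α) : ACEquiv (M * (N * P)) ((M * N) * P)
  | refl (M : FreeMagma α) : ACEquiv M M
  | symm {M N : FreeMagma α} : ACEquiv M N → ACEquiv N M
  | trans {M N P : FreeMagma α} : ACEquiv M N → ACEquiv N P → ACEquiv M P
  | mul_congr {M M' N N' : FreeMagma α} :
      ACEquiv M M' → ACEquiv N N' → ACEquiv (M * N) (M' * N')

/-- The multiset of leaves (atomic arguments) of a term of the pure AC theory. -/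
def leaves : FreeMagma α → Multiset α
  | FreeMagma.of a => {a}
  | FreeMagma.mul M N => leaves M + leaves N

theorem ACEquiv.leaves_eq {M N : FreeMagma α} (h : ACEquiv M N) : leaves M = leaves N := by
  induction h with
  | comm M N => exact add_comm (leaves M) (leaves N)
  | assoc M N P => exact (add_assoc (leaves M) (leaves N) (leaves P)).symm
  | refl M => rfl
  | symm _ ih => exact ih.symm
  | trans _ _ ih1 ih2 => exact ih1.trans ih2
  | mul_congr _ _ ih1 ih2 => exact congrArg₂ (· + ·) ih1 ih2

theorem card_leaves_pos (M : FreeMagma α) : 0 < (leaves M).card := by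
  induction M with
  | ih1 a => exact Nat.one_pos
  | ih2 M N h1 h2 =>
    change 0 < (leaves M + leaves N).card
    rw [Multiset.card_add]
    omega

/-- Terms of bounded size with leaves in a finite set form a finite set. -/
theorem bounded_terms_finite (S : Set α) (hS : S.Finite) (n : ℕ) :
    {N : FreeMagma α | (leaves N).card ≤ n ∧ ∀ a ∈ leaves N, a ∈ S}.Finite := by
  induction n with
  | zero =>
    refine Set.finite_empty.subset ?_
    rintro N ⟨h, -⟩
    have := card_leaves_pos N
    omega
  | succ n ih =>
    refine ((hS.image FreeMagma.of).union (Set.Finite.image2 FreeMagma.mul ih ih)).subset ?_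
    rintro N ⟨h, hN⟩
    cases N with
    | of a => exact Or.inl ⟨a, hN a (Multiset.mem_singleton_self a), rfl⟩
    | mul M N =>
      have hp := card_leaves_pos M
      have hq := card_leaves_pos N
      change (leaves M + leaves N).card ≤ n + 1 at h
      rw [Multiset.card_add] at h
      refine Or.inr ⟨M, ⟨by omega, fun a ha => hN a ?_⟩, N, ⟨by omega, fun a ha => hN a ?_⟩, rfl⟩
      · exact Multiset.mem_add.2 (Or.inl ha)
      · exact Multiset.mem_add.2 (Or.inr ha)

/-- The AC-equivalence class of any term of the pure AC theory is a finite set. -/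
theorem acEquiv_class_finite (M : FreeMagma α) :
    {N : FreeMagma α | ACEquiv N M}.Finite := by
  refine (bounded_terms_finite {a | a ∈ leaves M} (Multiset.finite_toSet _)
    (leaves M).card).subset ?_
  intro N h
  have e := ACEquiv.leaves_eq h
  exact ⟨by rw [e], fun a ha => by rw [e] at ha; exact ha⟩
end
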